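/- Let V be a type, w : V → V → ℝ≥0∞ a weight function, T ⊆ V, s ∈ T, and δ : V → ℝ≥0∞ with δ(s) = 0 and δ(u) ≥ d_w(s,u) for every u ∈ T; let w' be the contraction of T onto s. Fix r ∉ T and v ∉ T, and suppose there exist u ∈ T, y ∉ T, and walks A, B, C such that: A is a walk from r to s avoiding T∖{s}; B is a walk from s to u with all vertices in T and δ(u) ≤ weight(B); C is a walk from y to v avoiding T; and weight(A) + weight(B) + w(u,y) + weight(C) = d_w(r,v). Then the contraction exactly preserves the distance: d_{w'}(r,v) = d_w(r,v). (Corollary 4.4 of the paper, stated in purely graph-theoretic form.) -/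

import Mathlib

/-!
Distances only depend on edges through the triangle inequality: if every edge `(x, y)` used by a
walk satisfies `wDist w₁ x y ≤ w₂ x y`, then the `w₁`-distance between the ends of the walk is at
most its `w₂`-weight (`wDist_le_walkWeight_of_edges`). Both inequalities follow from this.

* `wDist w ≤ wDist w'`: each edge of the contraction `w'` dominates a `w`-distance. The only
  nontrivial edges are `(s, y)`, where `δ u + w u y ≥ wDist w s u + w u y ≥ wDist w s y`.
* `wDist w' r v ≤ wDist w r v`: the walks `A` and `C` avoid `T \ {s}`, and between such vertices
  `wDist w'` is at most `w` (a loop at `s` has infinite `w'`-weight but can be skipped, and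
  `δ s = 0` handles the edges leaving `s`). The middle part `B` followed by `(u, y)` is replaced by
  the single edge `(s, y)`, of `w'`-weight at most `δ u + w u y ≤ walkWeight w B + w u y`.
-/

open scoped ENNReal

/-- A walk from `u` to `v`: a nonempty list with head `u` and last element `v`. -/
def IsWalk {V : Type*} (p : List V) (u v : V) : Prop :=
  p ≠ [] ∧ p.head? = some u ∧ p.getLast? = some v

/-- The weight of a walk: the sum of `w x y` over consecutive pairs of the list. -/
noncomputable def walkWeight {V : Type*} (w : V → V → ℝ≥0∞) (p : List V) : ℝ≥0∞ :=
  ((p.zip p.tail).map fun e => w e.1 e.2).sum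

/-- The distance from `u` to `v`: the infimum of the weights of walks from `u` to `v`. -/
noncomputable def wDist {V : Type*} (w : V → V → ℝ≥0∞) (u v : V) : ℝ≥0∞ :=
  ⨅ (p : List V) (_ : IsWalk p u v), walkWeight w p

/- `contractW w T s δ` is the contraction of `T` onto `s ∈ T`, with offsets `δ`. -/
open Classical in
noncomputable def contractW {V : Type*} (w : V → V → ℝ≥0∞) (T : Set V) (s : V)
    (δ : V → ℝ≥0∞) : V → V → ℝ≥0∞ := fun x y =>
  if x ∈ T \ {s} ∨ y ∈ T \ {s} ∨ (x = s ∧ y = s) then ∞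
  else if x = s then ⨅ u ∈ T, (δ u + w u y)
  else w x y

theorem wDist_le_of_isWalk {V : Type*} (w : V → V → ℝ≥0∞) {p : List V} {u v : V}
    (h : IsWalk p u v) : wDist w u v ≤ walkWeight w p :=
  iInf₂_le p h

theorem wDist_self {V : Type*} (w : V → V → ℝ≥0∞) (u : V) : wDist w u u = 0 := by
  have h : IsWalk [u] u u := by simp [IsWalk]
  simpa [walkWeight] using wDist_le_of_isWalk w h

theorem wDist_le_edge {V : Type*} (w : V → V → ℝ≥0∞) (u v : V) : wDist w u v ≤ w u v := by
  have h : IsWalk [u, v] u v := by simp [IsWalk]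
  simpa [walkWeight] using wDist_le_of_isWalk w h

theorem wDist_le_edge_add {V : Type*} (w : V → V → ℝ≥0∞) (u x v : V) :
    wDist w u v ≤ w u x + wDist w x v := by
  conv_rhs => rw [wDist]
  simp only [ENNReal.add_iInf]
  refine le_iInf₂ fun p hp => ?_
  obtain ⟨hne, hhead, hlast⟩ := hp
  cases p with
  | nil => exact absurd rfl hne
  | cons a l =>
    obtain rfl : a = x := by simpa using hhead
    have h : IsWalk (u :: a :: l) u v := ⟨by simp, by simp, by simpa using hlast⟩
    simpa [walkWeight] using wDist_le_of_isWalk w h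

theorem wDist_le_walkWeight_add {V : Type*} (w : V → V → ℝ≥0∞) (v x : V) (p : List V) :
    ∀ u, IsWalk p u x → wDist w u v ≤ walkWeight w p + wDist w x v := by
  induction p with
  | nil => exact fun u h => absurd rfl h.1
  | cons a l ih =>
    rintro u ⟨-, hhead, hlast⟩
    obtain rfl : a = u := by simpa using hhead
    cases l with
    | nil =>
      obtain rfl : a = x := by simpa using hlast
      simp [walkWeight]
    | cons b l =>
      have h := ih b ⟨by simp, by simp, by simpa using hlast⟩
      calc wDist w a v ≤ w a b + wDist w b v := wDist_le_edge_add w a b v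
        _ ≤ w a b + (walkWeight w (b :: l) + wDist w x v) := by gcongr
        _ = walkWeight w (a :: b :: l) + wDist w x v := by simp [walkWeight, add_assoc]

theorem wDist_triangle {V : Type*} (w : V → V → ℝ≥0∞) (u x v : V) :
    wDist w u v ≤ wDist w u x + wDist w x v := by
  conv_rhs => rw [wDist]
  simp only [ENNReal.iInf_add]
  exact le_iInf₂ fun p hp => wDist_le_walkWeight_add w v x p u hp

/-- Edgewise domination of `w₁`-distances by `w₂` along a walk extends to the whole walk. -/
theorem wDist_le_walkWeight_of_edges {V : Type*} (w₁ w₂ : V → V → ℝ≥0∞) (v : V) (p : List V) :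
    (∀ x ∈ p, ∀ y ∈ p, wDist w₁ x y ≤ w₂ x y) → ∀ u, IsWalk p u v →
      wDist w₁ u v ≤ walkWeight w₂ p := by
  induction p with
  | nil => exact fun _ u h => absurd rfl h.1
  | cons a l ih =>
    rintro hw u ⟨-, hhead, hlast⟩
    obtain rfl : a = u := by simpa using hhead
    cases l with
    | nil =>
      obtain rfl : a = v := by simpa using hlast
      simp [wDist_self]
    | cons b l =>
      have h := ih (fun x hx y hy => hw x (List.mem_cons_of_mem _ hx) y (List.mem_cons_of_mem _ hy))
        b ⟨by simp, by simp, by simpa using hlast⟩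
      calc wDist w₁ a v ≤ wDist w₁ a b + wDist w₁ b v := wDist_triangle w₁ a b v
        _ ≤ w₂ a b + walkWeight w₂ (b :: l) := add_le_add (hw a (by simp) b (by simp)) h
        _ = walkWeight w₂ (a :: b :: l) := by simp [walkWeight]

theorem wDist_le_contractW {V : Type*} (w : V → V → ℝ≥0∞) (T : Set V) (s : V) (δ : V → ℝ≥0∞)
    (hδ : ∀ u ∈ T, wDist w s u ≤ δ u) (x y : V) : wDist w x y ≤ contractW w T s δ x y := by
  unfold contractW
  split_ifs with h₁ h₂
  · exact le_top
  · subst h₂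
    exact le_iInf₂ fun u hu => (wDist_triangle w x u y).trans
      (add_le_add (hδ u hu) (wDist_le_edge w u y))
  · exact wDist_le_edge w x y

theorem contractW_source_le {V : Type*} (w : V → V → ℝ≥0∞) (T : Set V) (s : V) (δ : V → ℝ≥0∞)
    {u y : V} (hu : u ∈ T) (hy : y ∉ T \ {s}) (hys : y ≠ s) :
    contractW w T s δ s y ≤ δ u + w u y := by
  have h : ¬(s ∈ T \ {s} ∨ y ∈ T \ {s} ∨ (s = s ∧ y = s)) := by
    rintro (h | h | h)
    · exact h.2 rfl
    · exact hy h
    · exact hys h.2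
  rw [contractW, if_neg h, if_pos rfl]
  exact iInf₂_le u hu

/-- The distance on the left is used rather than `contractW w T s δ x y` because the latter is
infinite when `x = y = s`. -/
theorem wDist_contractW_le {V : Type*} (w : V → V → ℝ≥0∞) (T : Set V) (s : V) (hs : s ∈ T)
    (δ : V → ℝ≥0∞) (hδs : δ s = 0) {x y : V} (hx : x ∉ T \ {s}) (hy : y ∉ T \ {s}) :
    wDist (contractW w T s δ) x y ≤ w x y := by
  by_cases hxy : x = y
  · subst hxy
    simp [wDist_self]
  refine (wDist_le_edge _ x y).trans ?_
  by_cases hxs : x = s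
  · subst hxs
    simpa [hδs] using contractW_source_le w T x δ hs hy (Ne.symm hxy)
  · rw [contractW, if_neg (by tauto), if_neg hxs]

/-- Corollary 4.4: under the decomposition hypothesis (supplied by Lemma 4.3),
contracting `T` onto `s` exactly preserves the distance from `r` to `v`. -/
theorem contraction_preserves_dist {V : Type*} (w : V → V → ℝ≥0∞)
    (T : Set V) (s : V) (hs : s ∈ T) (δ : V → ℝ≥0∞)
    (hδs : δ s = 0) (hδ : ∀ u ∈ T, wDist w s u ≤ δ u)
    (r v : V) (hr : r ∉ T) (hv : v ∉ T)
    (hdecomp : ∃ u ∈ T, ∃ y ∉ T, ∃ A B C : List V,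
      IsWalk A r s ∧ (∀ z ∈ A, z ∉ T \ {s}) ∧
      IsWalk B s u ∧ (∀ z ∈ B, z ∈ T) ∧ δ u ≤ walkWeight w B ∧
      IsWalk C y v ∧ (∀ z ∈ C, z ∉ T) ∧
      walkWeight w A + walkWeight w B + w u y + walkWeight w C = wDist w r v) :
    wDist (contractW w T s δ) r v = wDist w r v := by
  apply le_antisymm
  · obtain ⟨u, hu, y, hy, A, B, C, hA, hAT, -, -, hδB, hC, hCT, hsum⟩ := hdecomp
    have h₁ : wDist (contractW w T s δ) r s ≤ walkWeight w A :=
      wDist_le_walkWeight_of_edges _ w s A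
        (fun x hx z hz => wDist_contractW_le w T s hs δ hδs (hAT x hx) (hAT z hz)) r hA
    have h₂ : wDist (contractW w T s δ) s y ≤ walkWeight w B + w u y :=
      calc wDist (contractW w T s δ) s y ≤ contractW w T s δ s y := wDist_le_edge _ s y
        _ ≤ δ u + w u y :=
          contractW_source_le w T s δ hu (fun h => hy h.1) (fun h => hy (h ▸ hs))
        _ ≤ walkWeight w B + w u y := by gcongr
    have h₃ : wDist (contractW w T s δ) y v ≤ walkWeight w C :=
      wDist_le_walkWeight_of_edges _ w v C
        (fun x hx z hz => wDist_contractW_le w T s hs δ hδs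
          (fun h => hCT x hx h.1) (fun h => hCT z hz h.1)) y hC
    calc wDist (contractW w T s δ) r v
        ≤ wDist (contractW w T s δ) r s +
            (wDist (contractW w T s δ) s y + wDist (contractW w T s δ) y v) :=
          (wDist_triangle _ r s v).trans (add_le_add le_rfl (wDist_triangle _ s y v))
      _ ≤ walkWeight w A + (walkWeight w B + w u y + walkWeight w C) :=
          add_le_add h₁ (add_le_add h₂ h₃)
      _ = wDist w r v := by rw [← hsum]; ring
  · exact le_iInf₂ fun p hp => wDist_le_walkWeight_of_edges w _ v p
      (fun x _ y _ => wDist_le_contractW w T s δ hδ x y) r hp
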